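/- arXiv:2602.04888 — 5 statements merged into one kernel-verified Lean document; each statement's English description precedes it below -/
import Mathlib

section
/- Let G be a finite simple graph with vertex set V, let w be a nonnegative weight function on the edges of G, let B ⊆ V be a distinguished set of boundary vertices, and let W⋆ ⊆ V. Then the following are equivalent: (1) for every W ⊆ V with W ∩ B = W⋆ ∩ B one has |C(W⋆)| ≤ |C(W)|; (2) for every W ⊆ V with W ∩ B = W⋆ ∩ B and every connected component R of the subgraph of G induced on the symmetric difference W Δ W⋆, the total weight of the edges of ∂R that lie in C(W⋆) is at most the total weight of the edges of ∂R that lie in C(W). (This is the combinatorial content of the paper's local–global compatibility theorem: a distinguished cut is globally weight-minimizing among homologous cuts if and only if the polygon inequalities hold on every connected region of disagreement.) -/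
open scoped Classical symmDiff

/-- The cut of a vertex set `W`: the edges of `G` with exactly one endpoint in `W`. -/
def graphCut {V : Type*} (G : SimpleGraph V) (W : Set V) : Set (Sym2 V) :=
  {e | e ∈ G.edgeSet ∧ ∃ a b, e = s(a, b) ∧ a ∈ W ∧ b ∉ W}

/-- The total weight of a set of edges. -/
noncomputable def edgeWeight {V : Type*} [Fintype V] [DecidableEq V]
    (w : Sym2 V → ℝ) (S : Set (Sym2 V)) : ℝ :=
  ∑ e : Sym2 V, S.indicator w e

/-- `R` is (the vertex set of) a connected component of the subgraph of `G`
induced on `D`. -/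
def IsCompOf {V : Type*} (G : SimpleGraph V) (D R : Set V) : Prop :=
  ∃ c : (SimpleGraph.induce D G).ConnectedComponent, R = Subtype.val '' c.supp

theorem mem_graphCut_iff {V : Type*} (G : SimpleGraph V) (W : Set V) (a b : V) :
    s(a, b) ∈ graphCut G W ↔ G.Adj a b ∧ ¬ (a ∈ W ↔ b ∈ W) := by
  unfold graphCut
  simp only [Set.mem_ofPred_eq, SimpleGraph.mem_edgeSet]
  refine and_congr_right fun _ => ⟨?_, ?_⟩
  · rintro ⟨x, y, h, hx, hy⟩
    rw [Sym2.eq_iff] at h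
    rcases h with ⟨rfl, rfl⟩ | ⟨rfl, rfl⟩ <;> tauto
  · intro h
    by_cases ha : a ∈ W
    · exact ⟨a, b, rfl, ha, by tauto⟩
    · exact ⟨b, a, Sym2.eq_swap, by tauto, ha⟩

theorem comp_subset {V : Type*} {G : SimpleGraph V} {D R : Set V} (h : IsCompOf G D R) :
    R ⊆ D := by
  obtain ⟨c, rfl⟩ := h
  rintro _ ⟨x, _, rfl⟩
  exact x.2

theorem comp_closed {V : Type*} {G : SimpleGraph V} {D R : Set V} (h : IsCompOf G D R)
    {a b : V} (hab : G.Adj a b) (ha : a ∈ R) (hb : b ∈ D) : b ∈ R := by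
  obtain ⟨c, rfl⟩ := h
  obtain ⟨x, hx, rfl⟩ := ha
  refine ⟨⟨b, hb⟩, ?_, rfl⟩
  rw [SimpleGraph.ConnectedComponent.mem_supp_iff] at hx ⊢
  rw [← hx]
  have : (SimpleGraph.induce D G).Adj ⟨b, hb⟩ x := by simpa using hab.symm
  exact SimpleGraph.ConnectedComponent.sound this.reachable

/-- An edge of the boundary of a component leaves `D`. -/
theorem comp_cut {V : Type*} {G : SimpleGraph V} {D R : Set V} (h : IsCompOf G D R)
    {a b : V} (hab : G.Adj a b) (hR : ¬ (a ∈ R ↔ b ∈ R)) : ¬ (a ∈ D ↔ b ∈ D) := by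
  have h1 := comp_closed h hab
  have h2 := comp_closed h hab.symm
  have h3 := @comp_subset _ _ _ _ h a
  have h4 := @comp_subset _ _ _ _ h b
  tauto

theorem edgeWeight_split {V : Type*} [Fintype V] [DecidableEq V]
    (w : Sym2 V → ℝ) (S T : Set (Sym2 V)) :
    edgeWeight w S = edgeWeight w (T ∩ S) + edgeWeight w (S \ T) := by
  unfold edgeWeight
  rw [← Finset.sum_add_distrib]
  refine Finset.sum_congr rfl fun e _ => ?_
  by_cases h1 : e ∈ S <;> by_cases h2 : e ∈ T <;> simp [Set.indicator, h1, h2]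

theorem edgeWeight_comps {V : Type*} [Fintype V] [DecidableEq V] (G : SimpleGraph V)
    (w : Sym2 V → ℝ) (D : Set V) (S : Set (Sym2 V)) :
    edgeWeight w (graphCut G D ∩ S) =
      ∑ c : (SimpleGraph.induce D G).ConnectedComponent,
        edgeWeight w (graphCut G (Subtype.val '' c.supp) ∩ S) := by
  unfold edgeWeight
  rw [Finset.sum_comm]
  refine Finset.sum_congr rfl fun e _ => ?_
  by_cases he : e ∈ graphCut G D
  · obtain ⟨hG, a, b, rfl, ha, hb⟩ := he
    have hG' : G.Adj a b := hG
    have key : ∀ c : (SimpleGraph.induce D G).ConnectedComponent,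
        s(a, b) ∈ graphCut G (Subtype.val '' c.supp) ↔
          (SimpleGraph.induce D G).connectedComponentMk ⟨a, ha⟩ = c := by
      intro c
      rw [mem_graphCut_iff]
      simp [hb, ha, hG']
    have hD : s(a, b) ∈ graphCut G D := ⟨hG, a, b, rfl, ha, hb⟩
    rw [Finset.sum_eq_single ((SimpleGraph.induce D G).connectedComponentMk ⟨a, ha⟩)]
    · simp only [Set.indicator, Set.mem_inter_iff, key, hD]
    · intro c _ hc
      apply Set.indicator_of_notMem
      rintro ⟨h, _⟩
      exact hc ((key c).1 h).symm
    · simp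
  · rw [Set.indicator_of_notMem (fun h => he h.1)]
    symm
    refine Finset.sum_eq_zero fun c _ => Set.indicator_of_notMem (fun h => he ?_) _
    induction e using Sym2.ind with
    | _ a b =>
      have := h.1
      rw [mem_graphCut_iff] at this ⊢
      exact ⟨this.1, comp_cut ⟨c, rfl⟩ this.1 this.2⟩

/-- **Local–global compatibility.**  A distinguished cut `C(W⋆)` is globally
weight-minimizing among homologous cuts (those `W` with `W ∩ B = W⋆ ∩ B`) iff for
every homologous `W` and every connected component `R` of the induced subgraph on
`W ∆ W⋆`, the total weight of the edges of `∂R` lying in `C(W⋆)` is at most the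
total weight of those lying in `C(W)`. -/
theorem local_global_compatibility {V : Type*} [Fintype V] [DecidableEq V]
    (G : SimpleGraph V) (w : Sym2 V → ℝ) (hw : ∀ e, 0 ≤ w e)
    (B Wstar : Set V) :
    (∀ W : Set V, W ∩ B = Wstar ∩ B →
        edgeWeight w (graphCut G Wstar) ≤ edgeWeight w (graphCut G W)) ↔
    (∀ W : Set V, W ∩ B = Wstar ∩ B →
        ∀ R : Set V, IsCompOf G (W ∆ Wstar) R →
          edgeWeight w (graphCut G R ∩ graphCut G Wstar) ≤
            edgeWeight w (graphCut G R ∩ graphCut G W)) := by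
  constructor
  · intro h W hW R hR
    have hsub := comp_subset hR
    have hB : (Wstar ∆ R) ∩ B = Wstar ∩ B := by
      ext x
      have h1 := Set.ext_iff.1 hW x
      have h2 := @hsub x
      simp only [Set.mem_inter_iff, Set.mem_symmDiff] at h1 h2 ⊢
      tauto
    have h1 := h _ hB
    rw [edgeWeight_split w (graphCut G Wstar) (graphCut G R),
      edgeWeight_split w (graphCut G (Wstar ∆ R)) (graphCut G R)] at h1
    have e1 : graphCut G R ∩ graphCut G (Wstar ∆ R) = graphCut G R ∩ graphCut G W := by
      ext e
      induction e using Sym2.ind with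
      | _ a b =>
        simp only [Set.mem_inter_iff, mem_graphCut_iff, Set.mem_symmDiff]
        have := @comp_cut _ _ _ _ hR a b
        simp only [Set.mem_symmDiff] at this
        grind
    have e2 : graphCut G (Wstar ∆ R) \ graphCut G R = graphCut G Wstar \ graphCut G R := by
      ext e
      induction e using Sym2.ind with
      | _ a b =>
        simp only [Set.mem_sdiff, mem_graphCut_iff, Set.mem_symmDiff]
        grind
    rw [e1, e2] at h1
    linarith
  · intro h W hW
    rw [edgeWeight_split w (graphCut G Wstar) (graphCut G (W ∆ Wstar)),
      edgeWeight_split w (graphCut G W) (graphCut G (W ∆ Wstar))]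
    have e2 : graphCut G Wstar \ graphCut G (W ∆ Wstar) =
        graphCut G W \ graphCut G (W ∆ Wstar) := by
      ext e
      induction e using Sym2.ind with
      | _ a b =>
        simp only [Set.mem_sdiff, mem_graphCut_iff, Set.mem_symmDiff]
        grind
    rw [e2, edgeWeight_comps, edgeWeight_comps]
    gcongr with c
    exact h W hW _ ⟨c, rfl⟩
end

section
/- Let G be a finite simple graph with vertex set V and nonnegative edge weights w, and let W, W⋆ ⊆ V. Then the difference of cut weights decomposes over the connected components of the induced subgraph on W Δ W⋆: |C(W)| − |C(W⋆)| = Σ_R ( w(∂R ∩ C(W)) − w(∂R ∩ C(W⋆)) ), where the sum runs over all connected components R of the subgraph of G induced on W Δ W⋆. -/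
open scoped Classical symmDiff

theorem mem_graphCut_mk {V : Type*} (G : SimpleGraph V) (W : Set V) (a b : V) :
    s(a, b) ∈ graphCut G W ↔ G.Adj a b ∧ ((a ∈ W ∧ b ∉ W) ∨ (b ∈ W ∧ a ∉ W)) := by
  unfold graphCut
  simp only [Set.mem_ofPred_eq, SimpleGraph.mem_edgeSet]
  refine and_congr_right fun _ => ⟨?_, ?_⟩
  · rintro ⟨x, y, h, hx, hy⟩
    rcases Sym2.eq_iff.1 h with ⟨rfl, rfl⟩ | ⟨rfl, rfl⟩
    · exact Or.inl ⟨hx, hy⟩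
    · exact Or.inr ⟨hx, hy⟩
  · rintro (⟨h1, h2⟩ | ⟨h1, h2⟩)
    · exact ⟨a, b, rfl, h1, h2⟩
    · exact ⟨b, a, Sym2.eq_swap, h1, h2⟩

/-- Edges with exactly one endpoint in the symmetric difference. -/
theorem edge_single {V : Type*} [Fintype V] [DecidableEq V]
    (G : SimpleGraph V) (w : Sym2 V → ℝ) (W Wstar : Set V) (a b : V)
    (ha : a ∈ W ∆ Wstar) (hb : b ∉ W ∆ Wstar) :
    (graphCut G W).indicator w s(a, b) - (graphCut G Wstar).indicator w s(a, b) =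
      ∑ c : (SimpleGraph.induce (W ∆ Wstar) G).ConnectedComponent,
        ((graphCut G (Subtype.val '' c.supp) ∩ graphCut G W).indicator w s(a, b)
          - (graphCut G (Subtype.val '' c.supp) ∩ graphCut G Wstar).indicator w s(a, b)) := by
  have key : ∀ c : (SimpleGraph.induce (W ∆ Wstar) G).ConnectedComponent,
      s(a, b) ∈ graphCut G (Subtype.val '' c.supp) ↔
        G.Adj a b ∧ c = (SimpleGraph.induce (W ∆ Wstar) G).connectedComponentMk ⟨a, ha⟩ := by
    intro c
    have hb' : b ∉ Subtype.val '' c.supp := by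
      rintro ⟨x, -, rfl⟩
      exact hb x.2
    have ha' : a ∈ Subtype.val '' c.supp ↔
        c = (SimpleGraph.induce (W ∆ Wstar) G).connectedComponentMk ⟨a, ha⟩ := by
      constructor
      · rintro ⟨x, hx, rfl⟩
        exact hx.symm
      · intro h
        exact ⟨⟨a, ha⟩, h.symm, rfl⟩
    rw [mem_graphCut_mk, ← ha']
    tauto
  rw [Finset.sum_eq_single
    ((SimpleGraph.induce (W ∆ Wstar) G).connectedComponentMk ⟨a, ha⟩)]
  · by_cases hab : G.Adj a b
    · simp only [Set.indicator, Set.mem_inter_iff, key, hab, true_and]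
    · simp only [Set.indicator, Set.mem_inter_iff, mem_graphCut_mk, hab, false_and]
  · intro c _ hc
    simp only [Set.indicator, Set.mem_inter_iff, key, hc, and_false, false_and, if_false, sub_self]
  · intro h
    exact absurd (Finset.mem_univ _) h

theorem edge_general {V : Type*} [Fintype V] [DecidableEq V]
    (G : SimpleGraph V) (w : Sym2 V → ℝ) (W Wstar : Set V) (e : Sym2 V) :
    (graphCut G W).indicator w e - (graphCut G Wstar).indicator w e =
      ∑ c : (SimpleGraph.induce (W ∆ Wstar) G).ConnectedComponent,
        ((graphCut G (Subtype.val '' c.supp) ∩ graphCut G W).indicator w e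
          - (graphCut G (Subtype.val '' c.supp) ∩ graphCut G Wstar).indicator w e) := by
  induction e with | _ a b
  by_cases h : a ∈ W ∆ Wstar ↔ b ∈ W ∆ Wstar
  · have hc : s(a, b) ∈ graphCut G W ↔ s(a, b) ∈ graphCut G Wstar := by
      rw [mem_graphCut_mk, mem_graphCut_mk]
      simp only [Set.mem_symmDiff] at h
      tauto
    simp only [Set.indicator, Set.mem_inter_iff, hc, sub_self, Finset.sum_const_zero]
  · by_cases ha : a ∈ W ∆ Wstar
    · exact edge_single G w W Wstar a b ha (by tauto)
    · rw [Sym2.eq_swap]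
      exact edge_single G w W Wstar b a (by_contra fun hb => h (iff_of_false ha hb)) ha

/-- **Component decomposition of the cut-weight difference.**  The difference
`|C(W)| − |C(W⋆)|` decomposes as a sum over the connected components `R` of the
subgraph of `G` induced on `W ∆ W⋆` of `w(∂R ∩ C(W)) − w(∂R ∩ C(W⋆))`. -/
theorem cut_difference_decomposition {V : Type*} [Fintype V] [DecidableEq V]
    (G : SimpleGraph V) (w : Sym2 V → ℝ) (hw : ∀ e, 0 ≤ w e)
    (W Wstar : Set V) :
    edgeWeight w (graphCut G W) - edgeWeight w (graphCut G Wstar) =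
      ∑ c : (SimpleGraph.induce (W ∆ Wstar) G).ConnectedComponent,
        (edgeWeight w (graphCut G (Subtype.val '' c.supp) ∩ graphCut G W)
          - edgeWeight w (graphCut G (Subtype.val '' c.supp) ∩ graphCut G Wstar)) := by
  simp only [edgeWeight, ← Finset.sum_sub_distrib]
  rw [Finset.sum_comm]
  exact Finset.sum_congr rfl fun e _ => edge_general G w W Wstar e
end

section
/- Define A : ℝⁿ → ℝⁿ by A(p) = p / √(1 + |p|²). For any p, q ∈ ℝⁿ, the mean value representation A(q) − A(p) = (∫₀¹ DA(p + t(q − p)) dt) (q − p) holds, where DA denotes the derivative of A; moreover the averaged linear map a := ∫₀¹ DA(p + t(q − p)) dt is positive definite, and satisfies ξᵀ a ξ ≥ |ξ|² / (1 + max(|p|, |q|)²)^{3/2} for all ξ ∈ ℝⁿ. (This is the linearization identity, with uniformly elliptic averaged coefficients, used to reduce comparison principles for the minimal surface operator to the linear maximum principle.) -/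
open Matrix

/-- The map `A(p) = p / √(1 + |p|²)` appearing in the divergence form of the
minimal surface operator (with `|·|` the Euclidean norm on `ℝⁿ`). -/
noncomputable def msoA (n : ℕ) (p : Fin n → ℝ) : Fin n → ℝ :=
  fun i => p i / Real.sqrt (1 + ∑ j, p j ^ 2)

/-- The Jacobian matrix of `msoA`, with entries
`δᵢⱼ / √(1 + |p|²) − pᵢ pⱼ / (1 + |p|²)^{3/2}`. -/
noncomputable def msoDA (n : ℕ) (p : Fin n → ℝ) : Matrix (Fin n) (Fin n) ℝ :=
  fun i j => (if i = j then (1 : ℝ) else 0) / Real.sqrt (1 + ∑ k, p k ^ 2)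
    - p i * p j / (1 + ∑ k, p k ^ 2) ^ ((3 : ℝ) / 2)

/-- The averaged coefficient matrix `a = ∫₀¹ DA(p + t(q − p)) dt`
(defined entrywise). -/
noncomputable def msoAvg (n : ℕ) (p q : Fin n → ℝ) : Matrix (Fin n) (Fin n) ℝ :=
  fun i j => ∫ t in (0 : ℝ)..1, msoDA n (p + t • (q - p)) i j


lemma mso_pos {n : ℕ} (p : Fin n → ℝ) : 0 < 1 + ∑ j, p j ^ 2 := by positivity

lemma mso_rpow {s : ℝ} (hs : 0 < s) : s ^ ((3 : ℝ) / 2) = s * Real.sqrt s := by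
  rw [Real.sqrt_eq_rpow, show (3 : ℝ) / 2 = 1 + 1 / 2 by norm_num, Real.rpow_add hs, Real.rpow_one]

lemma mso_cont (n : ℕ) (p q : Fin n → ℝ) (i j : Fin n) :
    Continuous fun t : ℝ => msoDA n (p + t • (q - p)) i j := by
  have h : ∀ t : ℝ, msoDA n (p + t • (q - p)) i j =
      (if i = j then (1 : ℝ) else 0) / Real.sqrt (1 + ∑ k, (p k + t * (q k - p k)) ^ 2)
      - (p i + t * (q i - p i)) * (p j + t * (q j - p j)) /
        ((1 + ∑ k, (p k + t * (q k - p k)) ^ 2) *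
          Real.sqrt (1 + ∑ k, (p k + t * (q k - p k)) ^ 2)) := by
    intro t
    have := mso_pos (p + t • (q - p))
    simp only [msoDA, mso_rpow this]
    simp
  simp only [h]
  have h1 : ∀ t : ℝ, 0 < 1 + ∑ k, (p k + t * (q k - p k)) ^ 2 := fun t => by positivity
  have h2 : ∀ t : ℝ, 0 < Real.sqrt (1 + ∑ k, (p k + t * (q k - p k)) ^ 2) :=
    fun t => Real.sqrt_pos.2 (h1 t)
  refine Continuous.sub (Continuous.div (by fun_prop) (by fun_prop) fun t => (h2 t).ne')
    (Continuous.div (by fun_prop) (by fun_prop) fun t => (mul_pos (h1 t) (h2 t)).ne')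

lemma mso_mulVec (n : ℕ) (p q v : Fin n → ℝ) (i : Fin n) :
    (msoAvg n p q *ᵥ v) i = ∫ t in (0 : ℝ)..1, (msoDA n (p + t • (q - p)) *ᵥ v) i := by
  simp only [mulVec, dotProduct, msoAvg]
  rw [intervalIntegral.integral_finsetSum
    (f := fun j t => msoDA n (p + t • (q - p)) i j * v j)
    (fun j _ => ((mso_cont n p q i j).mul continuous_const).intervalIntegrable _ _)]
  simp only [intervalIntegral.integral_mul_const]

lemma mso_mulVec_cont (n : ℕ) (p q v : Fin n → ℝ) (i : Fin n) :
    Continuous fun t : ℝ => (msoDA n (p + t • (q - p)) *ᵥ v) i := by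
  simp only [mulVec, dotProduct]
  exact continuous_finsetSum _ fun j _ => (mso_cont n p q i j).mul continuous_const

lemma mso_quad (n : ℕ) (p q v : Fin n → ℝ) :
    v ⬝ᵥ (msoAvg n p q *ᵥ v) =
      ∫ t in (0 : ℝ)..1, v ⬝ᵥ (msoDA n (p + t • (q - p)) *ᵥ v) := by
  simp only [dotProduct, mso_mulVec]
  rw [intervalIntegral.integral_finsetSum
    (f := fun j t => v j * (msoDA n (p + t • (q - p)) *ᵥ v) j)
    (fun j _ => (continuous_const.mul (mso_mulVec_cont n p q v j)).intervalIntegrable _ _)]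
  simp only [intervalIntegral.integral_const_mul]

lemma mso_DA_mulVec (n : ℕ) (p v : Fin n → ℝ) (i : Fin n) :
    (msoDA n p *ᵥ v) i = v i / Real.sqrt (1 + ∑ k, p k ^ 2)
      - p i * (∑ k, p k * v k) / ((1 + ∑ k, p k ^ 2) * Real.sqrt (1 + ∑ k, p k ^ 2)) := by
  simp only [mulVec, dotProduct, msoDA, mso_rpow (mso_pos p), sub_mul, Finset.sum_sub_distrib]
  congr 1
  · simp [ite_div, ite_mul, div_eq_mul_inv, mul_comm]
  · rw [Finset.mul_sum, Finset.sum_div]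
    exact Finset.sum_congr rfl fun j _ => by ring

lemma mso_DA_quad (n : ℕ) (p v : Fin n → ℝ) :
    (∑ i, v i ^ 2) / ((1 + ∑ k, p k ^ 2) * Real.sqrt (1 + ∑ k, p k ^ 2))
      ≤ v ⬝ᵥ (msoDA n p *ᵥ v) := by
  have h : v ⬝ᵥ (msoDA n p *ᵥ v) = (∑ i, v i ^ 2) / Real.sqrt (1 + ∑ k, p k ^ 2)
      - (∑ k, p k * v k) ^ 2 / ((1 + ∑ k, p k ^ 2) * Real.sqrt (1 + ∑ k, p k ^ 2)) := by
    simp only [dotProduct, mso_DA_mulVec, mul_sub, Finset.sum_sub_distrib]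
    congr 1
    · rw [Finset.sum_div]
      exact Finset.sum_congr rfl fun j _ => by ring
    · rw [sq, Finset.sum_mul, Finset.sum_div]
      exact Finset.sum_congr rfl fun j _ => by ring
  have cs := Finset.sum_mul_sq_le_sq_mul_sq Finset.univ p v
  have hS := mso_pos p
  have hr := Real.sqrt_pos.2 hS
  rw [h]
  generalize Real.sqrt (1 + ∑ k, p k ^ 2) = r at *
  have : (∑ i, v i ^ 2) / r = ((1 + ∑ k, p k ^ 2) * ∑ i, v i ^ 2) / ((1 + ∑ k, p k ^ 2) * r) := by
    field_simp
  rw [this, ← sub_div]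
  gcongr
  linarith

lemma mso_seg (n : ℕ) (p q : Fin n → ℝ) (t : ℝ) (h0 : 0 ≤ t) (h1 : t ≤ 1) :
    ∑ k, (p + t • (q - p)) k ^ 2 ≤
      max (Real.sqrt (∑ i, p i ^ 2)) (Real.sqrt (∑ i, q i ^ 2)) ^ 2 := by
  set M := max (Real.sqrt (∑ i, p i ^ 2)) (Real.sqrt (∑ i, q i ^ 2))
  have hp : ∑ i, p i ^ 2 ≤ M ^ 2 := by
    rw [← Real.sq_sqrt (show 0 ≤ ∑ i, p i ^ 2 by positivity)]
    gcongr
    exact le_max_left _ _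
  have hq : ∑ i, q i ^ 2 ≤ M ^ 2 := by
    rw [← Real.sq_sqrt (show 0 ≤ ∑ i, q i ^ 2 by positivity)]
    gcongr
    exact le_max_right _ _
  have : ∑ k, (p + t • (q - p)) k ^ 2 ≤ (1 - t) * ∑ i, p i ^ 2 + t * ∑ i, q i ^ 2 := by
    rw [Finset.mul_sum, Finset.mul_sum, ← Finset.sum_add_distrib]
    refine Finset.sum_le_sum fun k _ => ?_
    simp only [Pi.add_apply, Pi.smul_apply, Pi.sub_apply, smul_eq_mul]
    nlinarith [mul_nonneg (mul_nonneg h0 (sub_nonneg.2 h1)) (sq_nonneg (q k - p k))]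
  nlinarith [mul_le_mul_of_nonneg_left hp (sub_nonneg.2 h1), mul_le_mul_of_nonneg_left hq h0]

lemma mso_lower (n : ℕ) (p q ξ : Fin n → ℝ) :
      (∑ i, ξ i ^ 2) /
          (1 + max (Real.sqrt (∑ i, p i ^ 2)) (Real.sqrt (∑ i, q i ^ 2)) ^ 2)
            ^ ((3 : ℝ) / 2)
        ≤ ξ ⬝ᵥ (msoAvg n p q *ᵥ ξ) := by
  rw [mso_quad]
  have hc : Continuous fun t : ℝ => ξ ⬝ᵥ (msoDA n (p + t • (q - p)) *ᵥ ξ) := by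
    simp only [dotProduct]
    exact continuous_finsetSum _ fun j _ => continuous_const.mul (mso_mulVec_cont n p q ξ j)
  have := intervalIntegral.integral_mono_on (a := (0 : ℝ)) (b := 1) (μ := MeasureTheory.volume)
    zero_le_one
    (f := fun _ => (∑ i, ξ i ^ 2) /
          (1 + max (Real.sqrt (∑ i, p i ^ 2)) (Real.sqrt (∑ i, q i ^ 2)) ^ 2)
            ^ ((3 : ℝ) / 2))
    (continuous_const.intervalIntegrable _ _) (hc.intervalIntegrable _ _) (fun t ht => by
      refine le_trans ?_ (mso_DA_quad n _ ξ)
      have hS := mso_pos (p + t • (q - p))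
      have hr := Real.sqrt_pos.2 hS
      have hseg := mso_seg n p q t ht.1 ht.2
      rw [mso_rpow (by positivity)]
      gcongr)
  simpa using this

lemma mso_deriv (n : ℕ) (p q : Fin n → ℝ) (i : Fin n) (t : ℝ) :
    HasDerivAt (fun t : ℝ => msoA n (p + t • (q - p)) i)
      ((msoDA n (p + t • (q - p)) *ᵥ (q - p)) i) t := by
  rw [mso_DA_mulVec]
  have hS := mso_pos (p + t • (q - p))
  have hr := Real.sqrt_pos.2 hS
  have hl : ∀ k, HasDerivAt (fun t : ℝ => (p + t • (q - p)) k) ((q - p) k) t := fun k => by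
    simpa using ((hasDerivAt_id t).mul_const ((q - p) k)).const_add (p k)
  have hs : HasDerivAt (fun t : ℝ => 1 + ∑ k, (p + t • (q - p)) k ^ 2)
      (∑ k, 2 * ((p + t • (q - p)) k * (q - p) k)) t := by
    refine HasDerivAt.const_add _ (HasDerivAt.fun_sum fun k _ => ?_)
    refine ((hl k).pow 2).congr_deriv ?_
    simp; ring
  have hd := (hl i).div (hs.sqrt hS.ne') hr.ne'
  refine hd.congr_deriv ?_
  rw [← Finset.mul_sum, Real.sq_sqrt hS.le]
  have e := Real.sq_sqrt hS.le
  generalize Real.sqrt (1 + ∑ k, (p + t • (q - p)) k ^ 2) = r at *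
  rw [← e]
  field_simp

theorem msoA_mean_value (n : ℕ) (p q : Fin n → ℝ) :
    msoA n q - msoA n p = msoAvg n p q *ᵥ (q - p) ∧
    (msoAvg n p q).PosDef ∧
    (∀ ξ : Fin n → ℝ,
      (∑ i, ξ i ^ 2) /
          (1 + max (Real.sqrt (∑ i, p i ^ 2)) (Real.sqrt (∑ i, q i ^ 2)) ^ 2)
            ^ ((3 : ℝ) / 2)
        ≤ ξ ⬝ᵥ (msoAvg n p q *ᵥ ξ)) := by
  refine ⟨?_, ?_, mso_lower n p q⟩
  · ext i
    rw [mso_mulVec, intervalIntegral.integral_eq_sub_of_hasDerivAt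
      (fun t _ => mso_deriv n p q i t) ((mso_mulVec_cont n p q _ i).intervalIntegrable _ _)]
    simp
  · refine Matrix.PosDef.of_dotProduct_mulVec_pos ?_ fun {ξ} hξ => ?_
    · ext i j
      simp only [conjTranspose_apply, msoAvg, star_trivial, msoDA, eq_comm (a := j) (b := i),
        mul_comm]
    · rw [star_trivial]
      refine lt_of_lt_of_le ?_ (mso_lower n p q ξ)
      obtain ⟨i, hi⟩ := Function.ne_iff.1 hξ
      have : 0 < ∑ i, ξ i ^ 2 :=
        Finset.sum_pos' (fun _ _ => sq_nonneg _) ⟨i, Finset.mem_univ _, sq_pos_of_ne_zero hi⟩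
      positivity
end

section
/- Strong comparison principle for the minimal surface operator: let Ω ⊆ ℝⁿ be a connected open set, and let u₁, u₂ be twice continuously differentiable real-valued functions on Ω with M(u₁)(x) ≤ M(u₂)(x) for all x ∈ Ω, where M is the minimal surface operator, and u₂(x) ≤ u₁(x) for all x ∈ Ω. If there exists x₀ ∈ Ω with u₁(x₀) = u₂(x₀), then u₁ = u₂ identically on Ω. (Geometrically: a minimal graph cannot touch, from the side on which it lies, another graph whose mean curvature points strictly away from it, unless the two coincide locally.) -/
/-- The `i`-th partial derivative of `u : ℝⁿ → ℝ` at `x`. -/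
noncomputable def pderiv' {n : ℕ} (u : (Fin n → ℝ) → ℝ) (i : Fin n)
    (x : Fin n → ℝ) : ℝ :=
  fderiv ℝ u x (Pi.single i 1)

/-- The minimal surface operator in divergence form,
`M(u) = ∑ᵢ Dᵢ (Dᵢu / √(1 + |Du|²))`. -/
noncomputable def minSurfOp {n : ℕ} (u : (Fin n → ℝ) → ℝ) (x : Fin n → ℝ) : ℝ :=
  ∑ i, fderiv ℝ
    (fun y => pderiv' u i y / Real.sqrt (1 + ∑ j, (pderiv' u j y) ^ 2))
    x (Pi.single i 1)


noncomputable def hess' {n : ℕ} (u : (Fin n → ℝ) → ℝ) (i j : Fin n) (x : Fin n → ℝ) : ℝ :=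
  fderiv ℝ (pderiv' u j) x (Pi.single i 1)

noncomputable def coefA {n : ℕ} (p : Fin n → ℝ) (i j : Fin n) : ℝ :=
  ((1 + ∑ k, p k ^ 2) * (if i = j then 1 else 0) - p i * p j) / (Real.sqrt (1 + ∑ k, p k ^ 2)) ^ 3

lemma fderiv_apply_sum {n : ℕ} (L : (Fin n → ℝ) →L[ℝ] ℝ) (v : Fin n → ℝ) :
    L v = ∑ i, v i * L (Pi.single i 1) := by
  conv_lhs => rw [pi_eq_sum_univ' v, map_sum]
  refine Finset.sum_congr rfl fun i _ => ?_
  rw [map_smul, smul_eq_mul]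

lemma pderiv'_contDiffAt {n : ℕ} {u : (Fin n → ℝ) → ℝ} {x : Fin n → ℝ}
    (h : ContDiffAt ℝ 2 u x) (i : Fin n) : ContDiffAt ℝ 1 (pderiv' u i) x := by
  have := h.fderiv_right (m := 1) (by norm_num)
  exact this.clm_apply contDiffAt_const

lemma minSurf_formula {n : ℕ} {u : (Fin n → ℝ) → ℝ} {x : Fin n → ℝ}
    (h : ContDiffAt ℝ 2 u x) :
    minSurfOp u x = ∑ i, ∑ j, coefA (fun k => pderiv' u k x) i j * hess' u i j x := by
  unfold minSurfOp
  refine Finset.sum_congr rfl fun i _ => ?_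
  have hd : ∀ j, HasFDerivAt (pderiv' u j) (fderiv ℝ (pderiv' u j) x) x := fun j =>
    ((pderiv'_contDiffAt h j).differentiableAt (by norm_num)).hasFDerivAt
  have hpos : 0 < 1 + ∑ j, (pderiv' u j x) ^ 2 := by positivity
  have hS : HasFDerivAt (fun y => 1 + ∑ j, (pderiv' u j y) ^ 2)
      (∑ j, (2 * pderiv' u j x) • fderiv ℝ (pderiv' u j) x) x := by
    refine HasFDerivAt.const_add _ ?_
    refine HasFDerivAt.fun_sum fun j _ => ?_
    have := (hd j).pow 2
    simpa using this
  have hW := hS.sqrt hpos.ne'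
  have hWpos : 0 < Real.sqrt (1 + ∑ j, (pderiv' u j x) ^ 2) := Real.sqrt_pos.2 hpos
  have hq := ((hd i).fun_mul ((hasDerivAt_inv hWpos.ne').comp_hasFDerivAt x hW))
  have e : (fun y => pderiv' u i y / Real.sqrt (1 + ∑ j, (pderiv' u j y) ^ 2)) =
    (fun y => pderiv' u i y * (Real.sqrt (1 + ∑ j, (pderiv' u j y) ^ 2))⁻¹) := by
    funext y; rw [div_eq_mul_inv]
  rw [e]
  erw [hq.fderiv]
  simp only [coefA, hess']
  have hsq := Real.sq_sqrt hpos.le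
  set W := Real.sqrt (1 + ∑ j, (pderiv' u j x) ^ 2) with hWdef
  simp only [← hsq]
  have : ∀ j, (W ^ 2 * (if i = j then (1:ℝ) else 0) - pderiv' u i x * pderiv' u j x) / W ^ 3 *
      (fderiv ℝ (pderiv' u j) x) (Pi.single i 1) =
      (if i = j then (fderiv ℝ (pderiv' u j) x) (Pi.single i 1) / W else 0) -
      pderiv' u i x / W ^ 3 * (pderiv' u j x * (fderiv ℝ (pderiv' u j) x) (Pi.single i 1)) := by
    intro j
    split_ifs <;> field_simp
    ring
  simp only [this, Finset.sum_sub_distrib, ← Finset.mul_sum]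
  simp [mul_assoc, ← Finset.mul_sum]
  field_simp
  ring

lemma pderiv'_sub {n : ℕ} {f g : (Fin n → ℝ) → ℝ} {x : Fin n → ℝ}
    (hf : ContDiffAt ℝ 2 f x) (hg : ContDiffAt ℝ 2 g x) (i : Fin n) :
    pderiv' (fun y => f y - g y) i x = pderiv' f i x - pderiv' g i x := by
  unfold pderiv'
  rw [fderiv_fun_sub (hf.differentiableAt (by norm_num)) (hg.differentiableAt (by norm_num))]
  rfl

lemma hess'_sub {n : ℕ} {f g : (Fin n → ℝ) → ℝ} {x : Fin n → ℝ}
    (hf : ContDiffAt ℝ 2 f x) (hg : ContDiffAt ℝ 2 g x) (i j : Fin n) :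
    hess' (fun y => f y - g y) i j x = hess' f i j x - hess' g i j x := by
  unfold hess'
  have e : pderiv' (fun y => f y - g y) j =ᶠ[nhds x] fun y => pderiv' f j y - pderiv' g j y := by
    filter_upwards [hf.eventually (by simp), hg.eventually (by simp)] with y h1 h2
    exact pderiv'_sub h1 h2 j
  rw [e.fderiv_eq, fderiv_fun_sub ((pderiv'_contDiffAt hf j).differentiableAt (by norm_num))
    ((pderiv'_contDiffAt hg j).differentiableAt (by norm_num))]
  rfl

lemma second_deriv_nonneg {φ : ℝ → ℝ} (hc : ContinuousAt φ 0) (hm : IsLocalMin φ 0) :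
    0 ≤ deriv (deriv φ) 0 := by
  by_contra hneg
  push Not at hneg
  have h0 : deriv φ 0 = 0 := hm.deriv_eq_zero
  have hmax := isLocalMax_of_deriv_deriv_neg hneg h0 hc
  have hconst : φ =ᶠ[nhds 0] fun _ => φ 0 := by
    filter_upwards [hm, hmax] with t h1 h2
    exact le_antisymm h2 h1
  have := hconst.deriv.deriv_eq
  simp at this
  linarith

lemma localMin_conds {n : ℕ} {f : (Fin n → ℝ) → ℝ} {x : Fin n → ℝ}
    (hf : ContDiffAt ℝ 2 f x) (hm : IsLocalMin f x) :
    (∀ i, pderiv' f i x = 0) ∧ ∀ v : Fin n → ℝ, 0 ≤ ∑ i, ∑ j, v i * v j * hess' f i j x := by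
  refine ⟨fun i => by simp [pderiv', hm.fderiv_eq_zero], fun v => ?_⟩
  have hl : ∀ t : ℝ, HasDerivAt (fun t : ℝ => x + t • v) v t := fun t => by
    simpa using ((hasDerivAt_id t).smul_const v).const_add x
  have hcl : Filter.Tendsto (fun t : ℝ => x + t • v) (nhds 0) (nhds x) := by
    have := (hl 0).continuousAt.tendsto
    simpa using this
  have hd1 : deriv (fun t : ℝ => f (x + t • v)) =ᶠ[nhds 0]
      fun t => ∑ j, v j * pderiv' f j (x + t • v) := by
    filter_upwards [hcl.eventually (hf.eventually (by simp))] with t ht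
    have := (ht.differentiableAt (by norm_num)).hasFDerivAt.comp_hasDerivAt t (hl t)
    rw [show (fun t : ℝ => f (x + t • v)) = f ∘ fun t : ℝ => x + t • v from rfl, this.deriv,
      fderiv_apply_sum]
    rfl
  have hd2 : deriv (deriv (fun t : ℝ => f (x + t • v))) 0 =
      ∑ i, ∑ j, v i * v j * hess' f i j x := by
    rw [hd1.deriv_eq]
    have hh : HasDerivAt (fun t : ℝ => ∑ j, v j * pderiv' f j (x + t • v))
        (∑ j, v j * fderiv ℝ (pderiv' f j) x v) 0 := by
      refine HasDerivAt.fun_sum fun j _ => HasDerivAt.const_mul _ ?_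
      have h1 : HasFDerivAt (pderiv' f j) (fderiv ℝ (pderiv' f j) x) (x + (0:ℝ) • v) := by
        simpa using ((pderiv'_contDiffAt hf j).differentiableAt (by norm_num)).hasFDerivAt
      exact h1.comp_hasDerivAt (0:ℝ) (hl 0)
    rw [hh.deriv, Finset.sum_comm]
    refine Finset.sum_congr rfl fun j _ => ?_
    rw [fderiv_apply_sum, Finset.mul_sum]
    refine Finset.sum_congr rfl fun i _ => ?_
    unfold hess'; ring
  rw [← hd2]
  apply second_deriv_nonneg
  · have h1 : ContinuousAt f (x + (0:ℝ) • v) := by simpa using hf.continuousAt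
    exact ContinuousAt.comp (f := fun t : ℝ => x + t • v) h1 (hl 0).continuousAt
  · have := hcl.eventually hm
    simpa [IsLocalMin, IsMinFilter] using this

lemma barrier_derivs {n : ℕ} (c : Fin n → ℝ) (ε α b : ℝ) :
    let h : (Fin n → ℝ) → ℝ := fun x => ε * (Real.exp (-α * ∑ k, (x k - c k) ^ 2) - b)
    ContDiff ℝ 2 h ∧
    (∀ x i, pderiv' h i x = -(2 * α * (ε * Real.exp (-α * ∑ k, (x k - c k) ^ 2))) * (x i - c i)) ∧
    (∀ x i j, hess' h i j x = (ε * Real.exp (-α * ∑ k, (x k - c k) ^ 2)) *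
      (4 * α ^ 2 * (x i - c i) * (x j - c j) - 2 * α * (if i = j then 1 else 0))) := by
  intro h
  have hc : ∀ (x : Fin n → ℝ) (j : Fin n), HasFDerivAt (fun x : Fin n → ℝ => x j - c j)
      (ContinuousLinearMap.proj (R := ℝ) (φ := fun _ : Fin n => ℝ) j) x := fun x j =>
    (hasFDerivAt_apply j x).sub_const _
  have hE : ∀ x : Fin n → ℝ, HasFDerivAt (fun x : Fin n → ℝ => Real.exp (-α * ∑ k, (x k - c k) ^ 2))
      (Real.exp (-α * ∑ k, (x k - c k) ^ 2) • ((-α) • ∑ k, (2 * (x k - c k)) •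
        ContinuousLinearMap.proj (R := ℝ) (φ := fun _ : Fin n => ℝ) k)) x := by
    intro x
    refine HasFDerivAt.exp (HasFDerivAt.const_mul (HasFDerivAt.fun_sum fun k _ => ?_) _)
    simpa using (hc x k).pow 2
  have hp : ∀ x i, pderiv' h i x =
      -(2 * α * (ε * Real.exp (-α * ∑ k, (x k - c k) ^ 2))) * (x i - c i) := by
    intro x i
    have : HasFDerivAt h _ x := ((hE x).sub_const b).const_mul ε
    unfold pderiv'
    rw [this.fderiv]
    simp [Pi.single_apply]
    ring
  refine ⟨by fun_prop, hp, fun x i j => ?_⟩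
  unfold hess'
  have e : pderiv' h j = fun x =>
      (-(2 * α * ε) * Real.exp (-α * ∑ k, (x k - c k) ^ 2)) * (x j - c j) := by
    funext x; rw [hp]; ring
  rw [e, (((hE x).const_mul (-(2 * α * ε))).fun_mul (hc x j)).fderiv]
  simp [Pi.single_apply]
  by_cases hij : i = j
  · subst hij; simp; ring
  · simp [hij, Ne.symm hij]; ring

lemma coefA_psd {n : ℕ} (p : Fin n → ℝ) (S : Fin n → Fin n → ℝ)
    (hS : ∀ v : Fin n → ℝ, 0 ≤ ∑ i, ∑ j, v i * v j * S i j) :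
    0 ≤ ∑ i, ∑ j, coefA p i j * S i j := by
  have hW : 0 < Real.sqrt (1 + ∑ k, p k ^ 2) := Real.sqrt_pos.2 (by positivity)
  have hdiag : ∀ i, 0 ≤ S i i := by
    intro i
    have := hS (Pi.single i 1)
    simpa [Pi.single_apply] using this
  have hpair : ∀ k l, 0 ≤ p k ^ 2 * S l l + p l ^ 2 * S k k - p k * p l * S k l
      - p l * p k * S l k := by
    intro k l
    have := hS (fun i => p k * (if i = l then 1 else 0) - p l * (if i = k then 1 else 0))
    simp only [sub_mul, mul_sub, Finset.sum_sub_distrib, Finset.sum_add_distrib] at this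
    simp [mul_assoc] at this
    nlinarith [this]
  have hsum : 0 ≤ ∑ k, ∑ l, (p k ^ 2 * S l l + p l ^ 2 * S k k - p k * p l * S k l
      - p l * p k * S l k) :=
    Finset.sum_nonneg fun k _ => Finset.sum_nonneg fun l _ => hpair k l
  have e1 : ∑ k, ∑ l, p k ^ 2 * S l l = (∑ k, p k ^ 2) * ∑ l, S l l := by
    rw [Finset.sum_mul_sum]
  have e2 : ∑ k, ∑ l, p l ^ 2 * S k k = (∑ k, p k ^ 2) * ∑ l, S l l := by
    rw [Finset.sum_comm, Finset.sum_mul_sum]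
  have e3 : ∑ k, ∑ l, p l * p k * S l k = ∑ k, ∑ l, p k * p l * S k l := Finset.sum_comm
  simp only [Finset.sum_sub_distrib, Finset.sum_add_distrib, e1, e2, e3] at hsum
  have hd : 0 ≤ ∑ l, S l l := Finset.sum_nonneg fun l _ => hdiag l
  have e : ∑ i, ∑ j, coefA p i j * S i j = ((1 + ∑ k, p k ^ 2) * (∑ l, S l l) -
      ∑ k, ∑ l, p k * p l * S k l) / (Real.sqrt (1 + ∑ k, p k ^ 2)) ^ 3 := by
    rw [sub_div, Finset.mul_sum, Finset.sum_div, Finset.sum_div, ← Finset.sum_sub_distrib]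
    refine Finset.sum_congr rfl fun i _ => ?_
    rw [Finset.sum_div]
    have : ∀ j, coefA p i j * S i j = (if i = j then (1 + ∑ k, p k ^ 2) * S i j /
        (Real.sqrt (1 + ∑ k, p k ^ 2)) ^ 3 else 0) - p i * p j * S i j /
        (Real.sqrt (1 + ∑ k, p k ^ 2)) ^ 3 := by
      intro j
      unfold coefA
      split_ifs <;> ring
    simp only [this, Finset.sum_sub_distrib]
    simp
  rw [e]
  apply div_nonneg _ (by positivity)
  nlinarith

lemma coefA_lower {n : ℕ} (p ξ : Fin n → ℝ) :
    (∑ k, ξ k ^ 2) / (1 + ∑ k, p k ^ 2) ^ 2 ≤ ∑ i, ∑ j, coefA p i j * (ξ i * ξ j) := by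
  have h1 : 1 ≤ 1 + ∑ k, p k ^ 2 := by
    have : 0 ≤ ∑ k, p k ^ 2 := by positivity
    linarith
  have hW : 0 < Real.sqrt (1 + ∑ k, p k ^ 2) := Real.sqrt_pos.2 (by positivity)
  have hW1 : 1 ≤ Real.sqrt (1 + ∑ k, p k ^ 2) := Real.one_le_sqrt.2 h1
  have hsq := Real.sq_sqrt (le_trans zero_le_one h1)
  have e : ∑ i, ∑ j, coefA p i j * (ξ i * ξ j) = ((1 + ∑ k, p k ^ 2) * (∑ l, ξ l ^ 2) -
      (∑ k, p k * ξ k) ^ 2) / (Real.sqrt (1 + ∑ k, p k ^ 2)) ^ 3 := by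
    rw [sub_div, pow_two (∑ k, p k * ξ k), Finset.sum_mul_sum, Finset.mul_sum, Finset.sum_div,
      Finset.sum_div, ← Finset.sum_sub_distrib]
    refine Finset.sum_congr rfl fun i _ => ?_
    rw [Finset.sum_div]
    have : ∀ j, coefA p i j * (ξ i * ξ j) = (if i = j then (1 + ∑ k, p k ^ 2) * (ξ i * ξ j) /
        (Real.sqrt (1 + ∑ k, p k ^ 2)) ^ 3 else 0) - p i * ξ i * (p j * ξ j) /
        (Real.sqrt (1 + ∑ k, p k ^ 2)) ^ 3 := by
      intro j
      unfold coefA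
      split_ifs <;> ring
    simp only [this, Finset.sum_sub_distrib]
    simp [pow_two]
  have cs := Finset.sum_mul_sq_le_sq_mul_sq Finset.univ p ξ
  rw [e]
  have hξ : 0 ≤ ∑ k, ξ k ^ 2 := by positivity
  calc (∑ k, ξ k ^ 2) / (1 + ∑ k, p k ^ 2) ^ 2
      ≤ (∑ k, ξ k ^ 2) / (Real.sqrt (1 + ∑ k, p k ^ 2)) ^ 3 := by
        apply div_le_div_of_nonneg_left hξ (by positivity)
        nth_rewrite 2 [← hsq]
        rw [← pow_mul]
        exact pow_le_pow_right₀ hW1 (by norm_num)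
    _ ≤ _ := by
        apply div_le_div_of_nonneg_right _ (by positivity)
        nlinarith

lemma coefA_trace {n : ℕ} (p : Fin n → ℝ) :
    ∑ i, ∑ j, coefA p i j * (if i = j then 1 else 0) ≤ n := by
  have h1 : 1 ≤ 1 + ∑ k, p k ^ 2 := by
    have : 0 ≤ ∑ k, p k ^ 2 := by positivity
    linarith
  have hW : 0 < Real.sqrt (1 + ∑ k, p k ^ 2) := Real.sqrt_pos.2 (by positivity)
  have hW1 : 1 ≤ Real.sqrt (1 + ∑ k, p k ^ 2) := Real.one_le_sqrt.2 h1
  have hsq := Real.sq_sqrt (le_trans zero_le_one h1)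
  have : ∀ i, coefA p i i ≤ 1 := by
    intro i
    unfold coefA
    rw [div_le_one (by positivity)]
    have : Real.sqrt (1 + ∑ k, p k ^ 2) ^ 2 ≤ Real.sqrt (1 + ∑ k, p k ^ 2) ^ 3 :=
      pow_le_pow_right₀ hW1 (by norm_num)
    simp only [if_true]
    nlinarith [mul_self_nonneg (p i)]
  calc ∑ i, ∑ j, coefA p i j * (if i = j then 1 else 0) = ∑ i, coefA p i i := by simp
    _ ≤ ∑ i : Fin n, (1:ℝ) := Finset.sum_le_sum fun i _ => this i
    _ = n := by simp

lemma coefA_lip {n : ℕ} (L : ℝ) : ∃ C : ℝ, 0 ≤ C ∧ ∀ p q : Fin n → ℝ, ‖p‖ ≤ L → ‖q‖ ≤ L →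
    ∀ i j, |coefA p i j - coefA q i j| ≤ C * ‖p - q‖ := by
  have hc : ContDiff ℝ 1 (fun p : Fin n → ℝ => (fun i j => coefA p i j : Fin n → Fin n → ℝ)) := by
    rw [contDiff_pi]; intro i
    rw [contDiff_pi]; intro j
    unfold coefA
    have hS : ContDiff ℝ 1 (fun p : Fin n → ℝ => 1 + ∑ k, p k ^ 2) := by fun_prop
    have hpos : ∀ p : Fin n → ℝ, 0 < 1 + ∑ k, p k ^ 2 := fun p => by positivity
    refine ContDiff.div ?_ ((hS.sqrt fun p => (hpos p).ne').pow 3) fun p =>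
      pow_ne_zero _ (Real.sqrt_pos.2 (hpos p)).ne'
    fun_prop
  obtain ⟨K, hK⟩ := (hc.locallyLipschitz.locallyLipschitzOn
    (s := Metric.closedBall 0 L)).exists_lipschitzOnWith_of_compact (isCompact_closedBall _ _)
  refine ⟨K, K.2, fun p q hp hq i j => ?_⟩
  have := hK.dist_le_mul p (by simpa using hp) q (by simpa using hq)
  rw [dist_eq_norm, dist_eq_norm] at this
  refine le_trans ?_ this
  exact (norm_le_pi_norm (((fun i j => coefA p i j : Fin n → Fin n → ℝ) -
    (fun i j => coefA q i j)) i) j).trans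
    (norm_le_pi_norm ((fun i j => coefA p i j : Fin n → Fin n → ℝ) - (fun i j => coefA q i j)) i)

lemma alg_strict {n : ℕ} (p₁ p₂ ξ : Fin n → ℝ) (H₁ H₂ : Fin n → Fin n → ℝ)
    (E α L K C D m : ℝ) (hE : 0 < E) (hα : 0 < α) (hK : 0 ≤ K) (hC : 0 ≤ C)
    (hL₁ : ∑ k, p₁ k ^ 2 ≤ L)
    (hH : ∀ i j, |H₂ i j| ≤ K) (hlip : ∀ i j, |coefA p₁ i j - coefA p₂ i j| ≤ C * ‖p₁ - p₂‖)
    (hξ : ‖ξ‖ ≤ D) (hm : m ≤ ∑ k, ξ k ^ 2)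
    (hp : p₁ - p₂ = (-(2 * α * E)) • ξ)
    (hpsd : ∀ v : Fin n → ℝ, 0 ≤ ∑ i, ∑ j, v i * v j * (H₁ i j - H₂ i j -
      E * (4 * α ^ 2 * ξ i * ξ j - 2 * α * (if i = j then 1 else 0))))
    (hα2 : n + n * n * (C * D * K) < 2 * α * (m / (1 + L) ^ 2)) :
    ∑ i, ∑ j, coefA p₂ i j * H₂ i j < ∑ i, ∑ j, coefA p₁ i j * H₁ i j := by
  have h1 := coefA_psd p₁ _ hpsd
  have h2 := coefA_lower p₁ ξ
  have h3 := coefA_trace p₁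
  have h4 : |∑ i, ∑ j, (coefA p₁ i j - coefA p₂ i j) * H₂ i j| ≤
      n * n * (C * (2 * α * E * D) * K) := by
    calc _ ≤ ∑ i : Fin n, ∑ j : Fin n, C * (2 * α * E * D) * K := by
          refine (Finset.abs_sum_le_sum_abs _ _).trans (Finset.sum_le_sum fun i _ => ?_)
          refine (Finset.abs_sum_le_sum_abs _ _).trans (Finset.sum_le_sum fun j _ => ?_)
          rw [abs_mul]
          have hn : ‖p₁ - p₂‖ ≤ 2 * α * E * D := by
            rw [hp, norm_smul, norm_neg, Real.norm_eq_abs, abs_of_pos (by positivity)]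
            gcongr
          have := hlip i j
          have hD : 0 ≤ D := (norm_nonneg _).trans hξ
          calc _ ≤ (C * ‖p₁ - p₂‖) * K :=
                mul_le_mul this (hH i j) (abs_nonneg _) (by positivity)
            _ ≤ _ := by gcongr
      _ = _ := by simp; ring
  have h5 : m / (1 + L) ^ 2 ≤ (∑ k, ξ k ^ 2) / (1 + ∑ k, p₁ k ^ 2) ^ 2 := by
    have hξ0 : 0 ≤ ∑ k, ξ k ^ 2 := by positivity
    have hp0 : 0 ≤ ∑ k, p₁ k ^ 2 := by positivity
    have hL0 : 0 ≤ L := hp0.trans hL₁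
    calc m / (1 + L) ^ 2 ≤ (∑ k, ξ k ^ 2) / (1 + L) ^ 2 := by gcongr
      _ ≤ _ := by gcongr
  have e : ∑ i, ∑ j, coefA p₁ i j * (H₁ i j - H₂ i j -
      E * (4 * α ^ 2 * ξ i * ξ j - 2 * α * (if i = j then 1 else 0))) =
      ∑ i, ∑ j, coefA p₁ i j * H₁ i j - ∑ i, ∑ j, coefA p₂ i j * H₂ i j
      - ∑ i, ∑ j, (coefA p₁ i j - coefA p₂ i j) * H₂ i j
      - E * (4 * α ^ 2 * ∑ i, ∑ j, coefA p₁ i j * (ξ i * ξ j) -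
        2 * α * ∑ i, ∑ j, coefA p₁ i j * (if i = j then 1 else 0)) := by
    simp only [Finset.mul_sum, ← Finset.sum_sub_distrib]
    refine Finset.sum_congr rfl fun i _ => Finset.sum_congr rfl fun j _ => ?_
    ring
  rw [e] at h1
  have h6 := neg_le_of_abs_le h4
  set X := ∑ i, ∑ j, coefA p₁ i j * (ξ i * ξ j)
  set T := ∑ i, ∑ j, coefA p₁ i j * (if i = j then 1 else 0)
  have h7 : n + n * n * (C * D * K) < 2 * α * X :=
    hα2.trans_le (by have := h5.trans h2; gcongr)
  have h8 : 0 < 2 * α * E * (2 * α * X - T - n * n * (C * D * K)) := by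
    apply mul_pos (by positivity); linarith
  nlinarith

/-- Hopf-type local contradiction. -/
lemma hopf_local {n : ℕ} {Ω : Set (Fin n → ℝ)}
    (hΩo : IsOpen Ω) {u₁ u₂ : (Fin n → ℝ) → ℝ}
    (h₁ : ContDiffOn ℝ 2 u₁ Ω) (h₂ : ContDiffOn ℝ 2 u₂ Ω)
    (hM : ∀ x ∈ Ω, minSurfOp u₁ x ≤ minSurfOp u₂ x)
    (hle : ∀ x ∈ Ω, u₂ x ≤ u₁ x)
    (y c : Fin n → ℝ) (hy : y ∈ Ω) (hty : u₁ y = u₂ y)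
    (hq : 0 < ∑ k, (y k - c k) ^ 2)
    (hball : ∀ x ∈ Ω, ∑ k, (x k - c k) ^ 2 ≤ ∑ k, (y k - c k) ^ 2 → x ≠ y → u₂ x < u₁ x) :
    False := by
  have hc₁ : ∀ x ∈ Ω, ContDiffAt ℝ 2 u₁ x := fun x hx => h₁.contDiffAt (hΩo.mem_nhds hx)
  have hc₂ : ∀ x ∈ Ω, ContDiffAt ℝ 2 u₂ x := fun x hx => h₂.contDiffAt (hΩo.mem_nhds hx)
  have hqc : Continuous fun x : Fin n → ℝ => ∑ k, (x k - c k) ^ 2 := by fun_prop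
  obtain ⟨ρ, hρ, hsub⟩ : ∃ ρ > 0, Metric.closedBall y ρ ⊆
      {x | x ∈ Ω ∧ (∑ k, (y k - c k) ^ 2) / 2 < ∑ k, (x k - c k) ^ 2} := by
    have : ∀ᶠ x in nhds y, x ∈ Ω ∧ (∑ k, (y k - c k) ^ 2) / 2 < ∑ k, (x k - c k) ^ 2 :=
      (hΩo.eventually_mem hy).and (hqc.continuousAt.eventually (lt_mem_nhds (by linarith)))
    exact Metric.nhds_basis_closedBall.mem_iff.1 this
  have hsubΩ : Metric.closedBall y ρ ⊆ Ω := fun x hx => (hsub hx).1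
  have hcomp := isCompact_closedBall y ρ
  -- bounds
  have hbd : ∀ u : (Fin n → ℝ) → ℝ, (∀ x ∈ Ω, ContDiffAt ℝ 2 u x) →
      ∃ L, 0 ≤ L ∧ ∀ x ∈ Metric.closedBall y ρ, ‖fun i => pderiv' u i x‖ ≤ L := by
    intro u hu
    have : ContinuousOn (fun x => fun i => pderiv' u i x) (Metric.closedBall y ρ) :=
      continuousOn_pi.2 fun i x hx =>
        (pderiv'_contDiffAt (hu x (hsubΩ hx)) i).continuousAt.continuousWithinAt
    obtain ⟨L, hL⟩ := hcomp.exists_bound_of_continuousOn this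
    exact ⟨max L 0, le_max_right _ _, fun x hx => (hL x hx).trans (le_max_left _ _)⟩
  obtain ⟨L₁, hL₁0, hL₁⟩ := hbd u₁ hc₁
  obtain ⟨L₂, hL₂0, hL₂⟩ := hbd u₂ hc₂
  obtain ⟨K, hK0, hK⟩ : ∃ K, 0 ≤ K ∧ ∀ x ∈ Metric.closedBall y ρ, ∀ i j, |hess' u₂ i j x| ≤ K := by
    have : ContinuousOn (fun x => (fun i j => hess' u₂ i j x : Fin n → Fin n → ℝ))
        (Metric.closedBall y ρ) := by
      refine continuousOn_pi.2 fun i => continuousOn_pi.2 fun j => fun x hx => ?_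
      have h := (pderiv'_contDiffAt (hc₂ x (hsubΩ hx)) j).fderiv_right (m := 0) (by norm_num)
      exact (h.clm_apply contDiffAt_const).continuousAt.continuousWithinAt
    obtain ⟨L, hL⟩ := hcomp.exists_bound_of_continuousOn this
    refine ⟨max L 0, le_max_right _ _, fun x hx i j => ?_⟩
    refine le_trans ?_ ((hL x hx).trans (le_max_left _ _))
    exact (norm_le_pi_norm ((fun i j => hess' u₂ i j x : Fin n → Fin n → ℝ) i) j).trans
      (norm_le_pi_norm (fun i j => hess' u₂ i j x : Fin n → Fin n → ℝ) i)
  obtain ⟨C, hC0, hC⟩ := coefA_lip (n := n) (max L₁ L₂)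
  set Q := ∑ k, (y k - c k) ^ 2 with hQ
  set D := ‖y - c‖ + ρ with hD
  set B := (Q / 2) / (1 + n * L₁ ^ 2) ^ 2 with hB
  have hBpos : 0 < B := by positivity
  obtain ⟨α, hα⟩ := exists_gt (max 0 ((n + n * n * (C * D * K)) / (2 * B)))
  have hα0 : 0 < α := (le_max_left _ _).trans_lt hα
  have hα2 : n + n * n * (C * D * K) < 2 * α * B := by
    have := (le_max_right _ _).trans_lt hα
    rw [div_lt_iff₀ (by positivity)] at this
    linarith
  have hwc : ContinuousOn (fun x => u₁ x - u₂ x) Ω := h₁.continuousOn.sub h₂.continuousOn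
  obtain ⟨ε, hε, hεle⟩ : ∃ ε, 0 < ε ∧ ∀ x ∈ Metric.sphere y ρ ∩ {x | ∑ k, (x k - c k) ^ 2 ≤ Q},
      ε ≤ u₁ x - u₂ x := by
    refine IsCompact.exists_forall_le' ?_ (hwc.mono ?_) ?_
    · exact (isCompact_sphere y ρ).inter_right (isClosed_le hqc continuous_const)
    · exact fun x hx => hsubΩ (Metric.sphere_subset_closedBall hx.1)
    · rintro x ⟨hx1, hx2⟩
      have := hball x (hsubΩ (Metric.sphere_subset_closedBall hx1)) hx2 (by
        rintro rfl; simp at hx1; exact hρ.ne hx1)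
      linarith
  obtain ⟨hh, hhp, hhH⟩ := barrier_derivs c ε α (Real.exp (-α * Q))
  set h : (Fin n → ℝ) → ℝ := fun x => ε * (Real.exp (-α * ∑ k, (x k - c k) ^ 2) - Real.exp (-α * Q))
    with hhdef
  have hfc : ContinuousOn (fun x => u₁ x - u₂ x - h x) (Metric.closedBall y ρ) :=
    (hwc.mono hsubΩ).sub hh.continuous.continuousOn
  obtain ⟨P, hP, hPmin⟩ := hcomp.exists_isMinOn ⟨y, Metric.mem_closedBall_self hρ.le⟩ hfc
  have hPy : u₁ P - u₂ P - h P ≤ 0 := by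
    have := hPmin (Metric.mem_closedBall_self hρ.le)
    simp only [Set.mem_ofPred_eq] at this
    have hy0 : h y = 0 := by simp [hhdef, hQ]
    rw [hy0, hty] at this
    linarith
  have hPball : P ∈ Metric.ball y ρ := by
    rw [Metric.mem_ball]
    refine lt_of_le_of_ne hP fun hPs => ?_
    by_cases hPQ : ∑ k, (P k - c k) ^ 2 ≤ Q
    · have h1 := hεle P ⟨hPs, hPQ⟩
      have h2 : Real.exp (-α * ∑ k, (P k - c k) ^ 2) ≤ 1 := by
        rw [Real.exp_le_one_iff]
        have : 0 ≤ ∑ k, (P k - c k) ^ 2 := by positivity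
        nlinarith
      have h3 := Real.exp_pos (-α * Q)
      have h4 : h P < ε := by
        simp only [hhdef]; nlinarith
      linarith
    · push Not at hPQ
      have h1 := hle P (hsubΩ hP)
      have h2 : Real.exp (-α * ∑ k, (P k - c k) ^ 2) < Real.exp (-α * Q) := by
        rw [Real.exp_lt_exp]; nlinarith
      have h4 : h P < 0 := by
        simp only [hhdef]; nlinarith
      linarith
  have hloc : IsLocalMin (fun x => u₁ x - u₂ x - h x) P :=
    hPmin.isLocalMin (Filter.mem_of_superset (Metric.isOpen_ball.mem_nhds hPball)
      Metric.ball_subset_closedBall)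
  have hPΩ := hsubΩ hP
  have c1 := hc₁ P hPΩ
  have c2 := hc₂ P hPΩ
  have c3 : ContDiffAt ℝ 2 h P := hh.contDiffAt
  obtain ⟨hgrad, hhess⟩ := localMin_conds ((c1.sub c2).sub c3) hloc
  have hfin := hM P hPΩ
  rw [minSurf_formula c1, minSurf_formula c2] at hfin
  refine absurd hfin (not_le.2 ?_)
  refine alg_strict _ _ (fun k => P k - c k) _ _ (ε * Real.exp (-α * ∑ k, (P k - c k) ^ 2)) α
    (n * L₁ ^ 2) K C D (Q / 2) (by positivity) hα0 hK0 hC0 ?_ (hK P hP) ?_ ?_ (hsub hP).2.le ?_ ?_ hα2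
  · calc ∑ k, pderiv' u₁ k P ^ 2 ≤ ∑ k : Fin n, L₁ ^ 2 := by
          refine Finset.sum_le_sum fun k _ => ?_
          have := (norm_le_pi_norm (fun i => pderiv' u₁ i P) k).trans (hL₁ P hP)
          rw [Real.norm_eq_abs] at this
          exact sq_le_sq' (neg_le_of_abs_le this) (le_of_abs_le this)
      _ = _ := by simp
  · exact hC _ _ ((hL₁ P hP).trans (le_max_left _ _)) ((hL₂ P hP).trans (le_max_right _ _))
  · calc ‖P - c‖ = ‖(y - c) + (P - y)‖ := by congr 1; abel
      _ ≤ ‖y - c‖ + ‖P - y‖ := norm_add_le _ _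
      _ ≤ D := by rw [← dist_eq_norm P y]; have := Metric.mem_closedBall.1 hP; linarith
  · funext i
    have := hgrad i
    rw [pderiv'_sub (c1.sub c2) c3, pderiv'_sub c1 c2, hhp] at this
    simp only [Pi.sub_apply, Pi.smul_apply, smul_eq_mul]
    linarith
  · intro v
    have := hhess v
    refine this.trans_eq (Finset.sum_congr rfl fun i _ => Finset.sum_congr rfl fun j _ => ?_)
    rw [hess'_sub (c1.sub c2) c3, hess'_sub c1 c2, hhH]

/-- **Strong comparison principle for the minimal surface operator.**  On a
connected open set `Ω`, if `M(u₁) ≤ M(u₂)` and `u₂ ≤ u₁` in `Ω`, and the two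
functions touch at an interior point, then they coincide on all of `Ω`. -/
theorem minSurfOp_strong_comparison {n : ℕ} (Ω : Set (Fin n → ℝ))
    (hΩo : IsOpen Ω) (hΩc : IsConnected Ω)
    (u₁ u₂ : (Fin n → ℝ) → ℝ)
    (h₁ : ContDiffOn ℝ 2 u₁ Ω) (h₂ : ContDiffOn ℝ 2 u₂ Ω)
    (hM : ∀ x ∈ Ω, minSurfOp u₁ x ≤ minSurfOp u₂ x)
    (hle : ∀ x ∈ Ω, u₂ x ≤ u₁ x)
    (x₀ : Fin n → ℝ) (hx₀ : x₀ ∈ Ω) (htouch : u₁ x₀ = u₂ x₀) :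
    ∀ x ∈ Ω, u₁ x = u₂ x := by
  have hwc : ContinuousOn (fun x => u₁ x - u₂ x) Ω := h₁.continuousOn.sub h₂.continuousOn
  -- the coincidence set is open
  have key : ∀ z ∈ Ω, u₁ z = u₂ z → ∀ᶠ x in nhds z, u₁ x = u₂ x := by
    intro z hz hzt
    obtain ⟨r, hr, hrsub⟩ := Metric.nhds_basis_closedBall.mem_iff.1 (hΩo.mem_nhds hz)
    by_contra hne
    have hqz : Continuous fun x : Fin n → ℝ => ∑ k, (z k - x k) ^ 2 := by fun_prop
    have hev : ∀ᶠ x in nhds z, x ∈ Ω ∧ ∑ k, (z k - x k) ^ 2 < (r / 2) ^ 2 :=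
      (hΩo.eventually_mem hz).and (hqz.continuousAt.eventually (gt_mem_nhds (by simp; positivity)))
    obtain ⟨c', hc'ne, hc'Ω, hc'r⟩ := ((Filter.not_eventually.1 hne).and_eventually hev).exists
    have hsup : ∀ x y : Fin n → ℝ, ∑ k, (x k - y k) ^ 2 < (r / 2) ^ 2 → dist x y < r / 2 := by
      intro x y hxy
      rw [dist_pi_lt_iff (by positivity)]
      intro k
      rw [Real.dist_eq]
      refine abs_lt_of_sq_lt_sq (lt_of_le_of_lt ?_ hxy) (by positivity)
      exact Finset.single_le_sum (f := fun k => (x k - y k) ^ 2) (fun i _ => sq_nonneg _)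
        (Finset.mem_univ k)
    have hZc : IsCompact (Metric.closedBall z r ∩ (fun x => u₁ x - u₂ x) ⁻¹' {0}) := by
      refine (isCompact_closedBall z r).of_isClosed_subset ?_ Set.inter_subset_left
      exact (hwc.mono hrsub).preimage_isClosed_of_isClosed Metric.isClosed_closedBall
        isClosed_singleton
    have hqc : Continuous fun x : Fin n → ℝ => ∑ k, (x k - c' k) ^ 2 := by fun_prop
    have hzZ : z ∈ Metric.closedBall z r ∩ (fun x => u₁ x - u₂ x) ⁻¹' {0} :=
      ⟨Metric.mem_closedBall_self hr.le, by simp [hzt]⟩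
    obtain ⟨y, ⟨hyr, hyt⟩, hymin⟩ := hZc.exists_isMinOn ⟨z, hzZ⟩ hqc.continuousOn
    have hyΩ := hrsub hyr
    have hyt' : u₁ y = u₂ y := by
      have : u₁ y - u₂ y = 0 := hyt
      linarith
    have hyz : ∑ k, (y k - c' k) ^ 2 ≤ ∑ k, (z k - c' k) ^ 2 := hymin hzZ
    have hin : ∀ x, ∑ k, (x k - c' k) ^ 2 < ∑ k, (y k - c' k) ^ 2 → u₁ x ≠ u₂ x := by
      intro x hx hxt
      have hxr : x ∈ Metric.closedBall z r := by
        have a := hsup x c' (by linarith)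
        have b := hsup z c' hc'r
        rw [Metric.mem_closedBall]
        have := dist_triangle_right x z c'
        linarith
      have : ∑ k, (y k - c' k) ^ 2 ≤ ∑ k, (x k - c' k) ^ 2 := hymin ⟨hxr, by simp [hxt]⟩
      linarith
    have hmid : ∀ x : Fin n → ℝ, ∑ k, (x k - c' k) ^ 2 =
        2 * ∑ k, (x k - (c' k + y k) / 2) ^ 2 + 2 * ∑ k, (y k - (c' k + y k) / 2) ^ 2
          - ∑ k, (x k - y k) ^ 2 := by
      intro x
      simp only [Finset.mul_sum, ← Finset.sum_add_distrib, ← Finset.sum_sub_distrib]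
      exact Finset.sum_congr rfl fun k _ => by ring
    have hposq : ∀ x x' : Fin n → ℝ, x ≠ x' → 0 < ∑ k, (x k - x' k) ^ 2 := by
      intro x x' hxx
      obtain ⟨k, hk⟩ := Function.ne_iff.1 hxx
      exact Finset.sum_pos' (fun i _ => sq_nonneg _)
        ⟨k, Finset.mem_univ k, by have := sub_ne_zero.2 hk; positivity⟩
    have hyc : y ≠ c' := by rintro rfl; exact hc'ne hyt'
    have hyy := hmid y
    have hyc2 := hposq y c' hyc
    simp only [sub_self, ne_eq, OfNat.ofNat_ne_zero, not_false_eq_true, zero_pow,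
      Finset.sum_const_zero, sub_zero] at hyy
    refine hopf_local hΩo h₁ h₂ hM hle y (fun k => (c' k + y k) / 2) hyΩ hyt' ?_ ?_
    · linarith
    · intro x hx hxq hxy
      refine lt_of_le_of_ne (hle x hx) (Ne.symm (hin x ?_))
      have := hmid x
      have := hposq x y hxy
      linarith
  -- connectedness
  have hO1 : IsOpen {x | x ∈ Ω ∧ u₁ x = u₂ x} := by
    rw [isOpen_iff_mem_nhds]
    rintro x ⟨hx, hxt⟩
    exact (hΩo.eventually_mem hx).and (key x hx hxt)
  have hO2 : IsOpen (Ω ∩ (fun x => u₁ x - u₂ x) ⁻¹' {0}ᶜ) :=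
    hwc.isOpen_inter_preimage hΩo isOpen_compl_singleton
  intro x hx
  by_contra hxne
  obtain ⟨w, -, ⟨-, hw1⟩, -, hw2⟩ := hΩc.isPreconnected _ _ hO1 hO2
    (fun a ha => by
      by_cases h : u₁ a = u₂ a
      · exact Or.inl ⟨ha, h⟩
      · exact Or.inr ⟨ha, sub_ne_zero.2 h⟩)
    ⟨x₀, hx₀, hx₀, htouch⟩ ⟨x, hx, hx, sub_ne_zero.2 hxne⟩
  exact hw2 (by simp [hw1])
end

section
/- Achronality from exposed loci (abstract causal form): let M be a set equipped with a preorder ≤ (modeling the causal relation), let ι be an index type, and let S : ι → Set M be a family of subsets (the HRT surfaces). For indices i, j define the interaction region C(i,j) = { m ∈ M | (∃ a ∈ S i, a ≤ m) ∧ (∃ b ∈ S j, m ≤ b) } and the exposed region E(i,j) = C(i,j) \ ⋃_{(k,l) ≠ (i,j)} C(k,l), the union ranging over all ordered pairs (k,l) of indices different from (i,j). Then for any two distinct ordered pairs (i,j) ≠ (k,l), any p ∈ E(i,j) and any q ∈ E(k,l) are causally incomparable: neither p ≤ q nor q ≤ p holds. In particular, any choice of projection loci lying inside the exposed regions of distinct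 pairs is mutually achronal. -/
/-- The interaction region of the ordered pair of sets `(S ij.1, S ij.2)`:
all points causally between a point of `S ij.1` and a point of `S ij.2`. -/
def interactionRegion {M : Type*} [Preorder M] {ι : Type*}
    (S : ι → Set M) (ij : ι × ι) : Set M :=
  {m | (∃ a ∈ S ij.1, a ≤ m) ∧ ∃ b ∈ S ij.2, m ≤ b}

/-- The exposed region of the pair `ij`: the part of its interaction region not
covered by the interaction region of any other ordered pair. -/
def exposedRegion {M : Type*} [Preorder M] {ι : Type*}
    (S : ι → Set M) (ij : ι × ι) : Set M :=
  interactionRegion S ij \ ⋃ kl ∈ {kl : ι × ι | kl ≠ ij}, interactionRegion S kl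

/-- **Achronality from exposed loci.**  Points lying in the exposed regions of
two distinct ordered pairs are causally incomparable. -/
theorem exposed_loci_achronal {M : Type*} [Preorder M] {ι : Type*}
    (S : ι → Set M) (ij kl : ι × ι) (hne : ij ≠ kl)
    (p q : M) (hp : p ∈ exposedRegion S ij) (hq : q ∈ exposedRegion S kl) :
    ¬ p ≤ q ∧ ¬ q ≤ p := by
  have key : ∀ (ij kl : ι × ι) (p q : M), ij ≠ kl → p ∈ exposedRegion S ij →
      q ∈ exposedRegion S kl → ¬ p ≤ q := by
    intro ij kl p q hne hp hq hpq
    have hu : ∀ (ab cd : ι × ι) (m : M), m ∈ exposedRegion S ab →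
        m ∈ interactionRegion S cd → cd = ab := by
      intro ab cd m hm hc
      by_contra hn
      exact hm.2 (Set.mem_biUnion (show cd ∈ {kl : ι × ι | kl ≠ ab} from hn) hc)
    obtain ⟨⟨a, ha, hap⟩, -⟩ := hp.1
    obtain ⟨-, ⟨b, hb, hqb⟩⟩ := hq.1
    have h1 := hu ij (ij.1, kl.2) p hp ⟨⟨a, ha, hap⟩, ⟨b, hb, hpq.trans hqb⟩⟩
    have h2 := hu kl (ij.1, kl.2) q hq ⟨⟨a, ha, hap.trans hpq⟩, ⟨b, hb, hqb⟩⟩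
    exact hne (h1.symm.trans h2)
  exact ⟨key ij kl p q hne hp hq, key kl ij q p hne.symm hq hp⟩
end
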